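/- arXiv:2605.19691 — 7 statements merged into one kernel-verified Lean document; each statement's English description precedes it below -/
import Mathlib

section
/- Let F be a finite field and let B₁,…,B_k ∈ F^{m×n} be a linearly independent family of matrices generating a matrix rank-metric code C = span_F{B₁,…,B_k} that is column-nondegenerate and row-nondegenerate and faithful (every nonzero element of the associated column-system S has rank m). Then C contains a codeword of maximum possible rank, i.e., there exists M ∈ C with rank(M) = min{m,n}. -/
open Matrix

section Defs

variable {K : Type*} [Field K]

/-- The row space of a matrix: the span of its rows in `K^b`. -/
noncomputable def rowSpace {a b : ℕ} (M : Matrix (Fin a) (Fin b) K) :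
    Submodule K (Fin b → K) :=
  Submodule.span K (Set.range fun i => M i)

/-- The column space of a matrix: the span of its columns in `K^a`. -/
noncomputable def colSpace {a b : ℕ} (M : Matrix (Fin a) (Fin b) K) :
    Submodule K (Fin a → K) :=
  Submodule.span K (Set.range fun j i => M i j)

/-- `Sc S U = {X ∈ S : colsp(X) ⊆ U}`, a subspace of the matrix space. -/
noncomputable def Sc {a b : ℕ} (S : Submodule K (Matrix (Fin a) (Fin b) K))
    (U : Submodule K (Fin a → K)) : Submodule K (Matrix (Fin a) (Fin b) K) where
  carrier := {X | X ∈ S ∧ colSpace X ≤ U}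
  add_mem' := by
    rintro X Y ⟨hXS, hXU⟩ ⟨hYS, hYU⟩
    refine ⟨S.add_mem hXS hYS, ?_⟩
    rw [colSpace, Submodule.span_le]
    rintro v ⟨j, rfl⟩
    have hx : (fun i => X i j) ∈ U := hXU (Submodule.subset_span ⟨j, rfl⟩)
    have hy : (fun i => Y i j) ∈ U := hYU (Submodule.subset_span ⟨j, rfl⟩)
    exact U.add_mem hx hy
  zero_mem' := by
    refine ⟨S.zero_mem, ?_⟩
    rw [colSpace, Submodule.span_le]
    rintro v ⟨j, rfl⟩
    exact U.zero_mem
  smul_mem' := by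
    rintro c X ⟨hXS, hXU⟩
    refine ⟨S.smul_mem c hXS, ?_⟩
    rw [colSpace, Submodule.span_le]
    rintro v ⟨j, rfl⟩
    exact U.smul_mem c (hXU (Submodule.subset_span ⟨j, rfl⟩))

/-- `Sr S U = {X ∈ S : rowsp(X) ⊆ U}`, a subspace of the matrix space. -/
noncomputable def Sr {a b : ℕ} (S : Submodule K (Matrix (Fin a) (Fin b) K))
    (U : Submodule K (Fin b → K)) : Submodule K (Matrix (Fin a) (Fin b) K) where
  carrier := {X | X ∈ S ∧ rowSpace X ≤ U}
  add_mem' := by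
    rintro X Y ⟨hXS, hXU⟩ ⟨hYS, hYU⟩
    refine ⟨S.add_mem hXS hYS, ?_⟩
    rw [rowSpace, Submodule.span_le]
    rintro v ⟨i, rfl⟩
    have hx : X i ∈ U := hXU (Submodule.subset_span ⟨i, rfl⟩)
    have hy : Y i ∈ U := hYU (Submodule.subset_span ⟨i, rfl⟩)
    exact U.add_mem hx hy
  zero_mem' := by
    refine ⟨S.zero_mem, ?_⟩
    rw [rowSpace, Submodule.span_le]
    rintro v ⟨i, rfl⟩
    exact U.zero_mem
  smul_mem' := by
    rintro c X ⟨hXS, hXU⟩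
    refine ⟨S.smul_mem c hXS, ?_⟩
    rw [rowSpace, Submodule.span_le]
    rintro v ⟨i, rfl⟩
    exact U.smul_mem c (hXU (Submodule.subset_span ⟨i, rfl⟩))

/-- Row support of a set of matrices: the sum of the row spaces of its elements. -/
noncomputable def rowSupport {a b : ℕ} (D : Submodule K (Matrix (Fin a) (Fin b) K)) :
    Submodule K (Fin b → K) :=
  ⨆ M ∈ D, rowSpace M

/-- Column support of a set of matrices: the sum of the column spaces of its elements. -/
noncomputable def colSupport {a b : ℕ} (D : Submodule K (Matrix (Fin a) (Fin b) K)) :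
    Submodule K (Fin a → K) :=
  ⨆ M ∈ D, colSpace M

/-- The hyperplane `u^⊥ = {v : ∑ i, u i * v i = 0}`. -/
noncomputable def perp {a : ℕ} (u : Fin a → K) : Submodule K (Fin a → K) where
  carrier := {v | ∑ i, u i * v i = 0}
  add_mem' := by
    intro v w hv hw
    simp only [Set.mem_setOf_eq, Pi.add_apply, mul_add, Finset.sum_add_distrib] at *
    simp [hv, hw]
  zero_mem' := by simp
  smul_mem' := by
    intro c v hv
    simp only [Set.mem_setOf_eq, Pi.smul_apply, smul_eq_mul] at *
    have : ∑ i, u i * (c * v i) = c * ∑ i, u i * v i := by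
      rw [Finset.mul_sum]; congr 1; ext i; ring
    simp [this, hv]

/-- The orthogonal complement `U^⊥ = {v : ∀ u ∈ U, ∑ i, u i * v i = 0}`. -/
noncomputable def perpSub {a : ℕ} (U : Submodule K (Fin a → K)) : Submodule K (Fin a → K) :=
  ⨅ u ∈ U, perp u

/-- The slices of the column-system: `(X l) i j = (B i) j l`. -/
def colSlices {m n k : ℕ} (B : Fin k → Matrix (Fin m) (Fin n) K) :
    Fin n → Matrix (Fin k) (Fin m) K :=
  fun l => Matrix.of fun i j => B i j l

/-- The slices of the row-system: `(Y j) l i = (B i) j l`. -/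
def rowSlices {m n k : ℕ} (B : Fin k → Matrix (Fin m) (Fin n) K) :
    Fin m → Matrix (Fin n) (Fin k) K :=
  fun j => Matrix.of fun l i => B i j l

/-- The linear map `u ↦ ∑ i, u i • B i` (i.e. `u ↦ m₁(T,u)`). -/
noncomputable def combMap {m n k : ℕ} (B : Fin k → Matrix (Fin m) (Fin n) K) :
    (Fin k → K) →ₗ[K] Matrix (Fin m) (Fin n) K where
  toFun u := ∑ i, u i • B i
  map_add' := by intro u v; simp [add_smul, Finset.sum_add_distrib]
  map_smul' := by intro c u; simp [smul_smul, Finset.smul_sum]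

/-- The `t`-th row-generalized rank weight. -/
noncomputable def dRow {a b : ℕ} (C : Submodule K (Matrix (Fin a) (Fin b) K)) (t : ℕ) : ℕ :=
  sInf {r | ∃ D : Submodule K (Matrix (Fin a) (Fin b) K),
    D ≤ C ∧ Module.finrank K D = t ∧ Module.finrank K (rowSupport D) = r}

/-- The `t`-th column-generalized rank weight. -/
noncomputable def dCol {a b : ℕ} (C : Submodule K (Matrix (Fin a) (Fin b) K)) (t : ℕ) : ℕ :=
  sInf {r | ∃ D : Submodule K (Matrix (Fin a) (Fin b) K),
    D ≤ C ∧ Module.finrank K D = t ∧ Module.finrank K (colSupport D) = r}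

end Defs

/-!
The matrices `∑ uᵢ Bᵢ`, evaluated at vectors `a`, form a bilinear map `(u, a) ↦ u X_a`, where
`X_a = ∑ aₗ Xₗ` runs through the column-system. Column-nondegeneracy gives `X_a ≠ 0` for `a ≠ 0`,
and faithfulness then makes `u ↦ u X_a` surjective. Counting the pairs `(u, a)` with `u X_a = 0` in
two ways shows that, for some `u`, the matrix `M = ∑ uᵢ Bᵢ` satisfies
`|F|ᵐ |ker M| < |F|ᵐ + |F|ⁿ`. Division by `|im M|` turns this into `cκ < c + κ` with
`c = |coker M|` and `κ = |ker M|`, so `c = 1` or `κ = 1`: the codeword `M` is surjective or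
injective. This last part uses only the additive groups.
-/

section FiniteGroups

variable {U V W : Type*} [AddGroup V]

lemma injective_or_surjective_of_card_mul_card_ker_lt [AddGroup W] [Finite V] [Finite W]
    (g : V →+ W) (h : Nat.card W * Nat.card g.ker < Nat.card W + Nat.card V) :
    Function.Injective g ∨ Function.Surjective g := by
  have hW : Nat.card g.range * g.range.index = Nat.card W := g.range.card_mul_index
  have hV : Nat.card g.ker * Nat.card g.range = Nat.card V := by
    rw [← AddSubgroup.index_ker, g.ker.card_mul_index]
  have hlt : g.range.index * Nat.card g.ker < g.range.index + Nat.card g.ker := by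
    refine Nat.lt_of_mul_lt_mul_left (a := Nat.card g.range) ?_
    calc Nat.card g.range * (g.range.index * Nat.card g.ker)
        = Nat.card W * Nat.card g.ker := by rw [← hW, mul_assoc]
      _ < Nat.card W + Nat.card V := h
      _ = Nat.card g.range * (g.range.index + Nat.card g.ker) := by rw [← hW, ← hV]; ring
  rw [← AddMonoidHom.ker_eq_bot_iff, ← AddMonoidHom.range_eq_top, ← AddSubgroup.card_eq_one,
    ← AddSubgroup.index_eq_one]
  by_contra! hne
  have hker : 2 ≤ Nat.card g.ker := by have := Nat.card_pos (α := g.ker); omega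
  have hindex : 2 ≤ g.range.index := by have := g.range.index_ne_zero_of_finite; omega
  exact (Nat.add_le_mul hindex hker).not_gt hlt

variable [AddGroup U] [AddCommGroup W]

lemma sum_card_ker_eq_sum_card_ker_flip [Fintype U] [Fintype V] (f : U →+ V →+ W) :
    ∑ u, Nat.card (f u).ker = ∑ v, Nat.card (f.flip v).ker := by
  classical
  simp only [Nat.card_eq_fintype_card, Fintype.card_subtype, AddMonoidHom.mem_ker,
    AddMonoidHom.flip_apply]
  exact Finset.sum_card_bipartiteAbove_eq_sum_card_bipartiteBelow fun u v => f u v = 0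

lemma card_mul_card_ker_of_surjective {g : U →+ W} (hg : Function.Surjective g) :
    Nat.card W * Nat.card g.ker = Nat.card U := by
  rw [mul_comm, ← g.ker.card_mul_index, AddSubgroup.index_ker, g.range_eq_top.2 hg,
    AddSubgroup.card_top]

lemma card_mul_sum_card_ker_lt [Fintype U] [Finite V] {f : U →+ V →+ W}
    (hf : ∀ v ≠ 0, Function.Surjective (f.flip v)) :
    Nat.card W * ∑ u, Nat.card (f u).ker < ∑ _u : U, (Nat.card W + Nat.card V) := by
  classical
  have := Fintype.ofFinite V
  have hker : ∀ v ∈ Finset.univ.erase 0, Nat.card W * Nat.card (f.flip v).ker = Nat.card U :=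
    fun v hv => card_mul_card_ker_of_surjective (hf v (Finset.ne_of_mem_erase hv))
  have hzero : Nat.card (f.flip 0).ker = Nat.card U := by simp
  have hV : 0 < Nat.card V := Nat.card_pos
  have hU : 0 < Nat.card U := Nat.card_pos
  calc Nat.card W * ∑ u, Nat.card (f u).ker
      = Nat.card W * Nat.card U + (Nat.card V - 1) * Nat.card U := by
        rw [sum_card_ker_eq_sum_card_ker_flip, Finset.mul_sum,
          ← Finset.add_sum_erase _ _ (Finset.mem_univ 0), hzero, Finset.sum_congr rfl hker,
          Finset.sum_const, Finset.card_erase_of_mem (Finset.mem_univ 0), Finset.card_univ,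
          ← Nat.card_eq_fintype_card, smul_eq_mul]
    _ < Nat.card W * Nat.card U + Nat.card V * Nat.card U := by gcongr; omega
    _ = ∑ _u : U, (Nat.card W + Nat.card V) := by
        rw [Finset.sum_const, Finset.card_univ, ← Nat.card_eq_fintype_card, smul_eq_mul]
        ring

lemma exists_injective_or_surjective_of_flip_surjective [Finite U] [Finite V] [Finite W]
    {f : U →+ V →+ W} (hf : ∀ v ≠ 0, Function.Surjective (f.flip v)) :
    ∃ u, Function.Injective (f u) ∨ Function.Surjective (f u) := by
  have := Fintype.ofFinite U
  have hsum := card_mul_sum_card_ker_lt hf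
  rw [Finset.mul_sum] at hsum
  obtain ⟨u, -, hu⟩ := Finset.exists_lt_of_sum_lt hsum
  exact ⟨u, injective_or_surjective_of_card_mul_card_ker_lt (f u) hu⟩

end FiniteGroups

section Rank

variable {K ι κ : Type*} [Field K] [Fintype ι] [Fintype κ]

lemma rank_eq_min_of_injective_or_surjective {M : Matrix ι κ K}
    (h : Function.Injective M.mulVec ∨ Function.Surjective M.mulVec) :
    M.rank = min (Fintype.card ι) (Fintype.card κ) := by
  have hheight : M.rank ≤ Fintype.card ι := M.rank_le_card_height
  have hwidth : M.rank ≤ Fintype.card κ := M.rank_le_card_width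
  rcases h with hinj | hsurj
  · have hrank : M.rank = Fintype.card κ :=
      (LinearMap.finrank_range_of_inj (f := M.mulVecLin) hinj).trans
        (Module.finrank_fintype_fun_eq_card K)
    omega
  · have hrank : M.rank = Fintype.card ι := by
      rw [Matrix.rank, LinearMap.range_eq_top.2 hsurj, finrank_top,
        Module.finrank_fintype_fun_eq_card]
    omega

lemma vecMul_surjective_of_rank_eq_card {X : Matrix ι κ K}
    (hX : X.rank = Fintype.card κ) : Function.Surjective fun u => u ᵥ* X := by
  have htop : LinearMap.range Xᵀ.mulVecLin = ⊤ := by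
    refine Submodule.eq_top_of_finrank_eq ?_
    rw [← Matrix.rank, Matrix.rank_transpose, hX, Module.finrank_fintype_fun_eq_card]
  intro y
  obtain ⟨u, hu⟩ := LinearMap.range_eq_top.1 htop y
  exact ⟨u, (Matrix.mulVec_transpose X u).symm.trans hu⟩

end Rank

section ColumnSystem

variable {K : Type*} [Field K] {m n k : ℕ}

lemma eq_zero_of_rowSupport_eq_top {C : Submodule K (Matrix (Fin m) (Fin n) K)}
    (hC : rowSupport C = ⊤) {a : Fin n → K} (ha : ∀ M ∈ C, M *ᵥ a = 0) : a = 0 := by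
  have hle : rowSupport C ≤ perp a := by
    refine iSup₂_le fun M hM => Submodule.span_le.2 ?_
    rintro _ ⟨i, rfl⟩
    exact (dotProduct_comm a (M i)).trans (congrFun (ha M hM) i)
  exact dotProduct_eq_zero a fun v => (hC ▸ hle) (Submodule.mem_top (x := v))

variable (B : Fin k → Matrix (Fin m) (Fin n) K)

lemma range_combMap : LinearMap.range (combMap B) = Submodule.span K (Set.range B) :=
  Fintype.range_linearCombination K B

lemma combMap_mulVec (u : Fin k → K) (a : Fin n → K) :
    combMap B u *ᵥ a = u ᵥ* combMap (colSlices B) a := by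
  ext j
  simp only [combMap, colSlices, LinearMap.coe_mk, AddHom.coe_mk, Matrix.mulVec, Matrix.vecMul,
    dotProduct, Matrix.sum_apply, Matrix.smul_apply, Matrix.of_apply, smul_eq_mul,
    Finset.sum_mul, Finset.mul_sum]
  rw [Finset.sum_comm]
  exact Finset.sum_congr rfl fun i _ => Finset.sum_congr rfl fun l _ => by ring

variable {B}

lemma combMap_colSlices_injective (hB : rowSupport (Submodule.span K (Set.range B)) = ⊤) :
    Function.Injective (combMap (colSlices B)) := by
  refine (injective_iff_map_eq_zero _).2 fun a ha => eq_zero_of_rowSupport_eq_top hB ?_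
  rw [← range_combMap]
  rintro _ ⟨u, rfl⟩
  rw [combMap_mulVec, ha, Matrix.vecMul_zero]

lemma combMap_mulVec_surjective (hB : rowSupport (Submodule.span K (Set.range B)) = ⊤)
    (hfaithful : ∀ X ∈ Submodule.span K (Set.range (colSlices B)), X ≠ 0 → X.rank = m)
    {a : Fin n → K} (ha : a ≠ 0) : Function.Surjective fun u => combMap B u *ᵥ a := by
  have hmem : combMap (colSlices B) a ∈ Submodule.span K (Set.range (colSlices B)) :=
    range_combMap (colSlices B) ▸ LinearMap.mem_range_self _ a
  have hne : combMap (colSlices B) a ≠ 0 :=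
    (map_ne_zero_iff _ (combMap_colSlices_injective hB)).2 ha
  simp only [combMap_mulVec]
  exact vecMul_surjective_of_rank_eq_card
    ((hfaithful _ hmem hne).trans (Fintype.card_fin m).symm)

end ColumnSystem

theorem stmt13_general {F : Type*} [Field F] [Finite F] {m n k : ℕ}
    (B : Fin k → Matrix (Fin m) (Fin n) F) (C : Submodule F (Matrix (Fin m) (Fin n) F))
    (hC : C = Submodule.span F (Set.range B)) (hcolnd : rowSupport C = ⊤)
    (S : Submodule F (Matrix (Fin k) (Fin m) F))
    (hS : S = Submodule.span F (Set.range (colSlices B)))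
    (hfaithful : ∀ X ∈ S, X ≠ 0 → X.rank = m) :
    ∃ M ∈ C, M.rank = min m n := by
  subst hC hS
  let f : (Fin k → F) →+ (Fin n → F) →+ (Fin m → F) :=
    LinearMap.toAddMonoidHom'.comp (Matrix.mulVecBilin F F ∘ₗ combMap B).toAddMonoidHom
  have hf : ∀ a ≠ 0, Function.Surjective (f.flip a) := fun a ha =>
    combMap_mulVec_surjective hcolnd hfaithful ha
  obtain ⟨u, hu⟩ := exists_injective_or_surjective_of_flip_surjective hf
  refine ⟨combMap B u, range_combMap B ▸ LinearMap.mem_range_self _ u, ?_⟩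
  simpa only [Fintype.card_fin] using rank_eq_min_of_injective_or_surjective hu

/-- Every faithful (column- and row-nondegenerate) matrix rank-metric code
over a finite field contains a codeword of maximum possible rank `min{m,n}`. -/
theorem stmt13 {F : Type*} [Field F] [Fintype F] {m n k : ℕ}
    (hm : 0 < m) (hn : 0 < n) (hk : 0 < k)
    (B : Fin k → Matrix (Fin m) (Fin n) F) (hB : LinearIndependent F B)
    (C : Submodule F (Matrix (Fin m) (Fin n) F))
    (hC : C = Submodule.span F (Set.range B))
    (hcolnd : rowSupport C = ⊤) (hrownd : colSupport C = ⊤)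
    (S : Submodule F (Matrix (Fin k) (Fin m) F))
    (hS : S = Submodule.span F (Set.range (colSlices B)))
    (hfaithful : ∀ X ∈ S, X ≠ 0 → X.rank = m) :
    ∃ M ∈ C, M.rank = min m n :=
  stmt13_general B C hC hcolnd S hS hfaithful
end

section
/- Let F be a finite field and let C ⊆ F^{m×n} be an F-subspace with dim_F C = k ≥ 1 that is a one-weight code: there is d ≥ 1 such that every nonzero M ∈ C has rank(M) = d. Then k ≤ m + n − d. -/
open Matrix

/-!
Count the pairs `(M, x)` with `M ∈ C` and `M x = 0`. Over a field with `q` elements, each `x` is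
killed by at least `q ^ (k - m)` of the `M`, whereas each `M ≠ 0` kills exactly `q ^ (n - d)` of the
`x`. If `k - m > n - d`, then modulo `q ^ (n - d + 1)` the total vanishes and so does the
contribution `q ^ n` of `M = 0`, so that `q` divides the number `q ^ k - 1` of nonzero elements
of `C`.
-/

section BilinearCounting

open Module LinearMap

theorem sum_natCard_ker_eq_sum_natCard_ker_flip {R V W U : Type*} [CommSemiring R]
    [AddCommMonoid V] [Module R V] [AddCommMonoid W] [Module R W] [AddCommMonoid U] [Module R U]
    [Fintype V] [Fintype W] (f : V →ₗ[R] W →ₗ[R] U) :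
    ∑ v, Nat.card (ker (f v)) = ∑ w, Nat.card (ker (f.flip w)) := by
  classical
  simpa [Finset.bipartiteAbove, Finset.bipartiteBelow, Nat.card_eq_fintype_card,
      Fintype.card_subtype] using
    Finset.sum_card_bipartiteAbove_eq_sum_card_bipartiteBelow (s := Finset.univ)
      (t := Finset.univ) fun v w => f v w = 0

variable {F V W U : Type*} [Field F] [AddCommGroup V] [Module F V] [FiniteDimensional F V]
  [AddCommGroup W] [Module F W] [AddCommGroup U] [Module F U] [FiniteDimensional F U]

theorem finrank_le_finrank_codomain_add_finrank_ker (g : V →ₗ[F] U) :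
    finrank F V ≤ finrank F U + finrank F (ker g) := by
  rw [← g.finrank_range_add_finrank_ker]
  gcongr
  exact (range g).finrank_le

variable [Finite F] [FiniteDimensional F W]

theorem natCard_dvd_ncard_setOf_finrank_ker_eq (f : V →ₗ[F] W →ₗ[F] U) {e : ℕ}
    (he : ∀ v, e ≤ finrank F (ker (f v))) (hlt : finrank F U + e < finrank F V) :
    Nat.card F ∣ {v | finrank F (ker (f v)) = e}.ncard := by
  classical
  have : Finite V := Module.finite_of_finite F
  have : Finite W := Module.finite_of_finite F
  cases nonempty_fintype V
  cases nonempty_fintype W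
  have card_ker (v : V) : Nat.card (ker (f v)) = Nat.card F ^ finrank F (ker (f v)) :=
    natCard_eq_pow_finrank
  have card_ker_flip (w : W) :
      Nat.card (ker (f.flip w)) = Nat.card F ^ finrank F (ker (f.flip w)) :=
    natCard_eq_pow_finrank
  have dvd_sum_flip : Nat.card F ^ (e + 1) ∣ ∑ w, Nat.card (ker (f.flip w)) := by
    refine Finset.dvd_sum fun w _ => card_ker_flip w ▸ pow_dvd_pow _ ?_
    have := finrank_le_finrank_codomain_add_finrank_ker (f.flip w)
    omega
  have dvd_sum_of_ne : Nat.card F ^ (e + 1) ∣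
      ∑ v with finrank F (ker (f v)) ≠ e, Nat.card (ker (f v)) :=
    Finset.dvd_sum fun v hv => card_ker v ▸
      pow_dvd_pow _ ((he v).lt_of_ne' (Finset.mem_filter.1 hv).2)
  have sum_of_eq : ∑ v with finrank F (ker (f v)) = e, Nat.card (ker (f v)) =
      {v | finrank F (ker (f v)) = e}.ncard * Nat.card F ^ e := by
    rw [← Finset.coe_filter_univ, Set.ncard_coe_finset, ← smul_eq_mul]
    exact Finset.sum_eq_card_nsmul fun v hv => by rw [card_ker, (Finset.mem_filter.1 hv).2]
  rw [← sum_natCard_ker_eq_sum_natCard_ker_flip,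
    ← Finset.sum_filter_add_sum_filter_not _ fun v => finrank F (ker (f v)) = e,
    Nat.dvd_add_left dvd_sum_of_ne, sum_of_eq, pow_succ'] at dvd_sum_flip
  exact Nat.dvd_of_mul_dvd_mul_right (pow_pos Nat.card_pos e) dvd_sum_flip

theorem not_natCard_dvd_ncard_compl_zero [Nontrivial V] :
    ¬ Nat.card F ∣ ({0}ᶜ : Set V).ncard := by
  have : Finite V := Module.finite_of_finite F
  have card_add_one : ({0}ᶜ : Set V).ncard + 1 = Nat.card F ^ finrank F V := by
    rw [← natCard_eq_pow_finrank (V := V), ← Set.ncard_singleton (0 : V), add_comm,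
      Set.ncard_add_ncard_compl]
  intro hdvd
  have dvd_one : Nat.card F ∣ 1 := by
    rw [← Nat.dvd_add_right hdvd, card_add_one]
    exact dvd_pow_self _ finrank_pos.ne'
  exact Finite.one_lt_card.ne' (Nat.dvd_one.1 dvd_one)

theorem stmt14_general [Nontrivial V] (f : V →ₗ[F] W →ₗ[F] U) {d : ℕ} (hd : d ≠ 0)
    (hf : ∀ v, v ≠ 0 → finrank F (range (f v)) = d) :
    finrank F V + d ≤ finrank F W + finrank F U := by
  have finrank_ker_zero : finrank F (ker (f 0)) = finrank F W := by
    rw [map_zero, ker_zero, finrank_top]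
  have finrank_ker_of_ne {v : V} (hv : v ≠ 0) : finrank F (ker (f v)) = finrank F W - d := by
    rw [← (f v).finrank_range_add_finrank_ker, hf v hv, Nat.add_sub_cancel_left]
  have d_le : d ≤ finrank F W := by
    obtain ⟨v, hv⟩ := exists_ne (0 : V)
    exact hf v hv ▸ finrank_range_le (f v)
  have le_finrank_ker (v : V) : finrank F W - d ≤ finrank F (ker (f v)) := by
    rcases eq_or_ne v 0 with rfl | hv
    · exact finrank_ker_zero ▸ Nat.sub_le _ _
    · exact (finrank_ker_of_ne hv).ge
  have setOf_eq : {v | finrank F (ker (f v)) = finrank F W - d} = {0}ᶜ := by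
    ext v
    refine ⟨?_, finrank_ker_of_ne⟩
    rintro h rfl
    have : finrank F W = finrank F W - d := finrank_ker_zero.symm.trans h
    omega
  by_contra! hlt
  have hdvd := natCard_dvd_ncard_setOf_finrank_ker_eq f le_finrank_ker (by omega)
  exact not_natCard_dvd_ncard_compl_zero (setOf_eq ▸ hdvd)

end BilinearCounting

/-- If `C ⊆ F^{m×n}` is a one-weight code of weight `d` and dimension `k`,
then `k ≤ m + n − d`. -/
theorem stmt14 {F : Type*} [Field F] [Fintype F] {m n k d : ℕ}
    (hm : 0 < m) (hn : 0 < n) (hk : 1 ≤ k) (hd : 1 ≤ d)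
    (C : Submodule F (Matrix (Fin m) (Fin n) F))
    (hC : Module.finrank F C = k)
    (hone : ∀ M ∈ C, M ≠ 0 → M.rank = d) :
    k ≤ m + n - d := by
  have : Nontrivial C := Module.nontrivial_of_finrank_pos (R := F) (hC ▸ hk)
  have rank_eq (M : C) (hM : M ≠ 0) : (M : Matrix (Fin m) (Fin n) F).rank = d :=
    hone M M.2 (by simpa using hM)
  have hle := stmt14_general ((mulVecBilin F F).comp C.subtype) (Nat.ne_of_gt hd) rank_eq
  rw [hC, Module.finrank_fin_fun, Module.finrank_fin_fun] at hle
  omega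
end

section
/- Let F be a finite field and let B₁,…,B_k ∈ F^{m×n} be a linearly independent family of matrices generating a matrix rank-metric code C = span_F{B₁,…,B_k} that is column-nondegenerate and row-nondegenerate, faithful (every nonzero element of the associated column-system S has rank m), and one-weight (there is d ≥ 1 with rank(M) = d for every nonzero M ∈ C). Then k = max{m,n} and d = min{m,n}. -/
open Matrix

/-!
The basis `B` of the code is a third-order tensor, hence a bilinear map `f : F^k × F^m → F^n`.
The one-weight condition says that `f u` has rank `d` for every `u ≠ 0`. Faithfulness and
column-nondegeneracy say that `f u v`, paired with `w ≠ 0`, cannot vanish for all `u` unless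
`v = 0`; dually, `f (·, v)` has rank `n` for every `v ≠ 0`. With `q = |F|`, counting the zeros of
`f` along each argument gives
`q ^ (m + n) * (q ^ d + q ^ k - 1) = q ^ (d + k) * (q ^ n + q ^ m - 1)`.
The second factors are coprime to `q`, so `{q ^ d, q ^ k}` and `{q ^ n, q ^ m}` have the same
product and the same sum, and therefore `{d, k} = {n, m}`. As `d` is a rank of `m × n` matrices,
it is the smaller one.
-/

section PowerEquation

theorem isCoprime_pow_pow_add_pow_sub_one {R : Type*} [CommRing R] (q : R) {a b : ℕ} (ha : a ≠ 0)
    (hb : b ≠ 0) (n : ℕ) : IsCoprime (q ^ n) (q ^ a + q ^ b - 1) := by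
  refine IsCoprime.pow_left ⟨q ^ (a - 1) + q ^ (b - 1), -1, ?_⟩
  rw [add_mul, pow_sub_one_mul ha, pow_sub_one_mul hb]
  ring

theorem eq_and_eq_or_of_pow_mul_pow_add_pow_sub_one {q : ℤ} (hq : 1 < q) {a b c d : ℕ}
    (ha : a ≠ 0) (hb : b ≠ 0) (hc : c ≠ 0) (hd : d ≠ 0)
    (h : q ^ (c + d) * (q ^ a + q ^ b - 1) = q ^ (a + b) * (q ^ c + q ^ d - 1)) :
    (a = c ∧ b = d) ∨ (a = d ∧ b = c) := by
  have hpow : q ^ (c + d) = q ^ (a + b) :=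
    Int.dvd_antisymm (by positivity) (by positivity)
      ((isCoprime_pow_pow_add_pow_sub_one q hc hd _).dvd_of_dvd_mul_right (Dvd.intro _ h))
      ((isCoprime_pow_pow_add_pow_sub_one q ha hb _).dvd_of_dvd_mul_right (Dvd.intro _ h.symm))
  have hinj := pow_right_injective₀ (by positivity) hq.ne'
  have hexp : c + d = a + b := hinj hpow
  have hsum : q ^ a + q ^ b - 1 = q ^ c + q ^ d - 1 :=
    mul_left_cancel₀ (by positivity) (hpow ▸ h)
  -- `q ^ a` is a root of `(X - q ^ c) * (X - q ^ d) = (X - q ^ a) * (X - q ^ b)`.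
  have hroot : (q ^ a - q ^ c) * (q ^ a - q ^ d) = 0 := by
    rw [pow_add, pow_add] at hpow
    linear_combination q ^ a * hsum + hpow
  rcases mul_eq_zero.1 hroot with hac | had
  · have : a = c := hinj (sub_eq_zero.1 hac)
    omega
  · have : a = d := hinj (sub_eq_zero.1 had)
    omega

end PowerEquation

section ConstantRank

open Module

variable {F U V W : Type*} [Field F] [AddCommGroup U] [Module F U] [AddCommGroup V] [Module F V]
  [AddCommGroup W] [Module F W]

theorem natCard_ker_mul_pow_finrank_range [FiniteDimensional F V] (g : V →ₗ[F] W) :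
    Nat.card (LinearMap.ker g) * Nat.card F ^ finrank F (LinearMap.range g) =
      Nat.card F ^ finrank F V := by
  rw [natCard_eq_pow_finrank (K := F), ← pow_add, add_comm, g.finrank_range_add_finrank_ker]

theorem natCard_zeros_eq_sum_natCard_ker [Fintype U] [Finite V] (f : U →ₗ[F] V →ₗ[F] W) :
    Nat.card {p : U × V // f p.1 p.2 = 0} = ∑ u, Nat.card (LinearMap.ker (f u)) := by
  rw [← Nat.card_sigma]
  exact Nat.card_congr (Equiv.subtypeProdEquivSigmaSubtype fun u v => f u v = 0)

variable [Finite F] [FiniteDimensional F U] [FiniteDimensional F V]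

theorem natCard_zeros_mul_pow_of_finrank_range_eq {f : U →ₗ[F] V →ₗ[F] W} {r : ℕ}
    (hr : ∀ u ≠ 0, finrank F (LinearMap.range (f u)) = r) :
    Nat.card {p : U × V // f p.1 p.2 = 0} * Nat.card F ^ r + Nat.card F ^ finrank F V =
      Nat.card F ^ finrank F V * (Nat.card F ^ r + Nat.card F ^ finrank F U) := by
  classical
  have : Finite U := Module.finite_of_finite F
  have : Finite V := Module.finite_of_finite F
  have := Fintype.ofFinite U
  set q := Nat.card F
  set m := finrank F V
  have hker (u : U) : Nat.card (LinearMap.ker (f u)) * q ^ r + (if u = 0 then q ^ m else 0) =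
      q ^ m + (if u = 0 then q ^ m * q ^ r else 0) := by
    split_ifs with hu
    · rw [hu, map_zero, LinearMap.ker_zero, Nat.card_congr Submodule.topEquiv.toEquiv,
        natCard_eq_pow_finrank (K := F), add_comm]
    · rw [← hr u hu, natCard_ker_mul_pow_finrank_range]
  calc _ = ∑ u, (Nat.card (LinearMap.ker (f u)) * q ^ r + if u = 0 then q ^ m else 0) := by
        rw [natCard_zeros_eq_sum_natCard_ker, Finset.sum_add_distrib, Finset.sum_mul,
          Fintype.sum_ite_eq']
    _ = Nat.card U * q ^ m + q ^ m * q ^ r := by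
        rw [Finset.sum_congr rfl fun u _ => hker u, Finset.sum_add_distrib, Fintype.sum_ite_eq',
          Finset.sum_const, Finset.card_univ, ← Nat.card_eq_fintype_card, smul_eq_mul]
    _ = _ := by
        rw [natCard_eq_pow_finrank (K := F) (V := U)]
        ring

theorem finrank_eq_or_finrank_eq_of_finrank_range_eq {f : U →ₗ[F] V →ₗ[F] W} (hf : f ≠ 0)
    {r s : ℕ} (hr : ∀ u ≠ 0, finrank F (LinearMap.range (f u)) = r)
    (hs : ∀ v ≠ 0, finrank F (LinearMap.range (f.flip v)) = s) :
    (r = s ∧ finrank F U = finrank F V) ∨ (r = finrank F V ∧ finrank F U = s) := by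
  obtain ⟨u, v, huv⟩ : ∃ u v, f u v ≠ 0 := by
    contrapose! hf
    exact LinearMap.ext₂ hf
  have hu : u ≠ 0 := by rintro rfl; simp at huv
  have hv : v ≠ 0 := by rintro rfl; simp at huv
  have hU : finrank F U ≠ 0 := (finrank_pos_iff_exists_ne_zero.2 ⟨u, hu⟩).ne'
  have hV : finrank F V ≠ 0 := (finrank_pos_iff_exists_ne_zero.2 ⟨v, hv⟩).ne'
  have hr0 : r ≠ 0 := by
    rw [← hr u hu, Ne, Submodule.finrank_eq_zero, LinearMap.range_eq_bot]
    exact fun h => huv (LinearMap.congr_fun h v)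
  have hs0 : s ≠ 0 := by
    rw [← hs v hv, Ne, Submodule.finrank_eq_zero, LinearMap.range_eq_bot]
    exact fun h => huv (LinearMap.congr_fun h u)
  have hq : (1 : ℤ) < Nat.card F := by exact_mod_cast Finite.one_lt_card
  have hflip : Nat.card {p : V × U // f.flip p.1 p.2 = 0} =
      Nat.card {p : U × V // f p.1 p.2 = 0} :=
    Nat.card_congr ((Equiv.prodComm V U).subtypeEquiv fun _ => Iff.rfl)
  have hleft := natCard_zeros_mul_pow_of_finrank_range_eq hr
  have hright := natCard_zeros_mul_pow_of_finrank_range_eq hs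
  rw [hflip] at hright
  refine eq_and_eq_or_of_pow_mul_pow_add_pow_sub_one hq hr0 hU hs0 hV ?_
  zify at hleft hright
  rw [pow_add, pow_add]
  linear_combination (Nat.card F : ℤ) ^ r * hright - (Nat.card F : ℤ) ^ s * hleft

end ConstantRank

section LinearAlgebra

variable {K : Type*} [Field K]

theorem surjective_of_dotProduct_eq_zero {U ι : Type*} [AddCommGroup U] [Module K U] [Fintype ι]
    {g : U →ₗ[K] ι → K} (hg : ∀ w, (∀ u, w ⬝ᵥ g u = 0) → w = 0) : Function.Surjective g := by
  classical
  rw [← LinearMap.dualMap_injective_iff, injective_iff_map_eq_zero]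
  intro φ hφ
  obtain ⟨w, rfl⟩ := (dotProductEquiv K ι).surjective φ
  rw [hg w fun u => LinearMap.congr_fun hφ u, map_zero]

theorem mulVec_injective_iff_rank_eq {m n : Type*} [Fintype n] {A : Matrix m n K} :
    Function.Injective A.mulVec ↔ A.rank = Fintype.card n := by
  rw [mulVec_injective_iff, linearIndependent_iff_card_eq_finrank_span,
    rank_eq_finrank_span_cols, eq_comm, Set.finrank]

theorem finrank_range_vecMulLinear {m n : Type*} [Fintype m] [Fintype n] (A : Matrix m n K) :
    Module.finrank K (LinearMap.range A.vecMulLinear) = A.rank := by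
  rw [← mulVecLin_transpose, ← rank_transpose, rank]

end LinearAlgebra

section Support

variable {K : Type*} [Field K] {a b : ℕ}

theorem mem_perp {v w : Fin a → K} : v ∈ perp w ↔ w ⬝ᵥ v = 0 :=
  Iff.rfl

theorem perp_eq_top_iff {w : Fin a → K} : perp w = ⊤ ↔ w = 0 := by
  simp only [Submodule.eq_top_iff', mem_perp, dotProduct_eq_zero_iff]

theorem rowSpace_le_perp_iff {M : Matrix (Fin a) (Fin b) K} {w : Fin b → K} :
    rowSpace M ≤ perp w ↔ M *ᵥ w = 0 := by
  simp [rowSpace, Submodule.span_le, Set.range_subset_iff, mem_perp, funext_iff, mulVec,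
    dotProduct_comm w]

theorem rowSupport_span_range_le_iff {ι : Type*} {B : ι → Matrix (Fin a) (Fin b) K}
    {U : Submodule K (Fin b → K)} :
    rowSupport (Submodule.span K (Set.range B)) ≤ U ↔ ∀ i, rowSpace (B i) ≤ U := by
  have hSr (M : Matrix (Fin a) (Fin b) K) : M ∈ Sr ⊤ U ↔ rowSpace M ≤ U :=
    and_iff_right Submodule.mem_top
  calc rowSupport (Submodule.span K (Set.range B)) ≤ U
    _ ↔ Submodule.span K (Set.range B) ≤ Sr ⊤ U :=
        iSup₂_le_iff.trans (forall₂_congr fun M _ => (hSr M).symm)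
    _ ↔ ∀ i, rowSpace (B i) ≤ U := by
        simp only [Submodule.span_le, Set.range_subset_iff, SetLike.mem_coe, hSr]

end Support

section Tensor

variable {K : Type*} [Field K] {m n k : ℕ} {B : Fin k → Matrix (Fin m) (Fin n) K}

theorem combMap_eq_linearCombination (B : Fin k → Matrix (Fin m) (Fin n) K) :
    combMap B = Fintype.linearCombination K B :=
  rfl

theorem combMap_mem_span_range (B : Fin k → Matrix (Fin m) (Fin n) K) (u : Fin k → K) :
    combMap B u ∈ Submodule.span K (Set.range B) := by
  rw [combMap_eq_linearCombination, ← Fintype.range_linearCombination]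
  exact LinearMap.mem_range_self _ u

theorem linearIndependent_iff_combMap_eq_zero :
    LinearIndependent K B ↔ ∀ u, combMap B u = 0 → u = 0 := by
  rw [linearIndependent_iff_injective_fintypeLinearCombination, ← combMap_eq_linearCombination,
    injective_iff_map_eq_zero]

theorem combMap_colSlices_apply (B : Fin k → Matrix (Fin m) (Fin n) K) (w : Fin n → K)
    (i : Fin k) : combMap (colSlices B) w i = B i *ᵥ w := by
  ext j
  simp [combMap, colSlices, Matrix.sum_apply, mulVec, dotProduct, mul_comm]

theorem linearIndependent_colSlices_of_rowSupport_eq_top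
    (hB : rowSupport (Submodule.span K (Set.range B)) = ⊤) :
    LinearIndependent K (colSlices B) := by
  refine linearIndependent_iff_combMap_eq_zero.2 fun w hw => ?_
  rw [← perp_eq_top_iff, eq_top_iff, ← hB, rowSupport_span_range_le_iff]
  intro i
  rw [rowSpace_le_perp_iff, ← combMap_colSlices_apply, hw]
  rfl

/-- The contraction `(u, v) ↦ v ᵥ* ∑ i, u i • B i` of the third-order tensor with slices `B i`
along its first two modes. -/
noncomputable def contraction (B : Fin k → Matrix (Fin m) (Fin n) K) :
    (Fin k → K) →ₗ[K] (Fin m → K) →ₗ[K] Fin n → K :=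
  (vecMulBilin K K).flip ∘ₗ combMap B

theorem finrank_range_contraction (B : Fin k → Matrix (Fin m) (Fin n) K) (u : Fin k → K) :
    Module.finrank K (LinearMap.range (contraction B u)) = (combMap B u).rank :=
  finrank_range_vecMulLinear (combMap B u)

theorem dotProduct_contraction (B : Fin k → Matrix (Fin m) (Fin n) K) (u : Fin k → K)
    (v : Fin m → K) (w : Fin n → K) :
    w ⬝ᵥ contraction B u v = u ⬝ᵥ (combMap (colSlices B) w *ᵥ v) := by
  calc w ⬝ᵥ (v ᵥ* combMap B u)
    _ = v ⬝ᵥ (∑ i, u i • B i) *ᵥ w := by rw [dotProduct_comm, ← dotProduct_mulVec]; rfl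
    _ = ∑ i, u i * (v ⬝ᵥ B i *ᵥ w) := by
        simp only [sum_mulVec, dotProduct_sum, smul_mulVec, dotProduct_smul, smul_eq_mul]
    _ = u ⬝ᵥ (combMap (colSlices B) w *ᵥ v) := by
        simp only [← combMap_colSlices_apply, dotProduct_comm v]
        rfl

theorem surjective_flip_contraction
    (hB : ∀ w ≠ 0, Function.Injective (combMap (colSlices B) w).mulVec)
    {v : Fin m → K} (hv : v ≠ 0) : Function.Surjective ((contraction B).flip v) := by
  refine surjective_of_dotProduct_eq_zero fun w hw => ?_
  contrapose! hv with hw0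
  refine hB w hw0 ?_
  rw [mulVec_zero, ← dotProduct_eq_zero_iff]
  intro u
  rw [dotProduct_comm, ← dotProduct_contraction]
  exact hw u

theorem finrank_range_flip_contraction
    (hB : ∀ w ≠ 0, Function.Injective (combMap (colSlices B) w).mulVec)
    {v : Fin m → K} (hv : v ≠ 0) :
    Module.finrank K (LinearMap.range ((contraction B).flip v)) = n := by
  rw [LinearMap.range_eq_top.2 (surjective_flip_contraction hB hv), finrank_top,
    Module.finrank_fin_fun]

end Tensor

/-- A faithful one-weight (column- and row-nondegenerate) `[m×n,k,d]_q` code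
satisfies `k = max{m,n}` and `d = min{m,n}`. -/
theorem stmt15 {F : Type*} [Field F] [Fintype F] {m n k d : ℕ}
    (hm : 0 < m) (hn : 0 < n) (hk : 0 < k) (hd : 1 ≤ d)
    (B : Fin k → Matrix (Fin m) (Fin n) F) (hB : LinearIndependent F B)
    (C : Submodule F (Matrix (Fin m) (Fin n) F))
    (hC : C = Submodule.span F (Set.range B))
    (hcolnd : rowSupport C = ⊤) (hrownd : colSupport C = ⊤)
    (S : Submodule F (Matrix (Fin k) (Fin m) F))
    (hS : S = Submodule.span F (Set.range (colSlices B)))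
    (hfaithful : ∀ X ∈ S, X ≠ 0 → X.rank = m)
    (hone : ∀ M ∈ C, M ≠ 0 → M.rank = d) :
    k = max m n ∧ d = min m n := by
  subst hC hS
  have hrank (u : Fin k → F) (hu : u ≠ 0) : (combMap B u).rank = d :=
    hone _ (combMap_mem_span_range B u) (mt (linearIndependent_iff_combMap_eq_zero.1 hB u) hu)
  have hslices := linearIndependent_colSlices_of_rowSupport_eq_top hcolnd
  have hinj (w : Fin n → F) (hw : w ≠ 0) :
      Function.Injective (combMap (colSlices B) w).mulVec := by
    rw [mulVec_injective_iff_rank_eq, Fintype.card_fin]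
    exact hfaithful _ (combMap_mem_span_range _ w)
      (mt (linearIndependent_iff_combMap_eq_zero.1 hslices w) hw)
  have hleft (u : Fin k → F) (hu : u ≠ 0) :
      Module.finrank F (LinearMap.range (contraction B u)) = d :=
    (finrank_range_contraction B u).trans (hrank u hu)
  have : NeZero k := ⟨hk.ne'⟩
  obtain ⟨u, hu⟩ := exists_ne (0 : Fin k → F)
  have hne : contraction B ≠ 0 := fun h => by
    simpa [h] using hd.trans_eq (hleft u hu).symm
  have hdm : d ≤ m := hrank u hu ▸ (combMap B u).rank_le_height
  have hdn : d ≤ n := hrank u hu ▸ (combMap B u).rank_le_width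
  have hdims := finrank_eq_or_finrank_eq_of_finrank_range_eq hne hleft fun _ hv =>
    finrank_range_flip_contraction hinj hv
  simp only [Module.finrank_fin_fun] at hdims
  omega
end

section
/- Let F be a finite field and let B₁,…,B_k ∈ F^{m×n} be a linearly independent family of matrices generating a matrix rank-metric code C = span_F{B₁,…,B_k} such that every nonzero M ∈ C has rank(M) = n. Then C is column-nondegenerate (equivalently, the column-system slices X₁,…,X_n are linearly independent), and every nonzero element X of the associated column-system S = span_F{X₁,…,X_n} has rank(X) = k. -/
open Matrix

/-!
Contract the `k × m × n` tensor `B` with `u` in the first mode and with `v` in the third. The order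
of the two contractions does not matter, so `u ᵥ* (∑ l, v l • X l) = (∑ i, u i • B i) *ᵥ v`. This
bilinear map has no zero divisors exactly when all the matrices `∑ i, u i • B i` with `u ≠ 0` have
trivial kernel, and also exactly when all the matrices `∑ l, v l • X l` with `v ≠ 0` have trivial
left kernel. The theorem passes from the first description to the second.
-/

section FullRank

variable {ι κ K : Type*} [Fintype κ] [Field K]

theorem rank_eq_card_width_iff {M : Matrix ι κ K} :
    M.rank = Fintype.card κ ↔ ∀ v, M *ᵥ v = 0 → v = 0 := by
  calc
    M.rank = Fintype.card κ ↔ LinearIndependent K M.col := by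
      rw [linearIndependent_iff_card_eq_finrank_span, Set.finrank, ← rank_eq_finrank_span_cols,
        eq_comm]
    _ ↔ Function.Injective M.mulVecLin := mulVec_injective_iff.symm
    _ ↔ ∀ v, M *ᵥ v = 0 → v = 0 := injective_iff_map_eq_zero M.mulVecLin

theorem rank_eq_card_height_iff [Fintype ι] {M : Matrix ι κ K} :
    M.rank = Fintype.card ι ↔ ∀ u, u ᵥ* M = 0 → u = 0 := by
  simp only [← rank_transpose M, rank_eq_card_width_iff, mulVec_transpose]

end FullRank

section RowSupport

variable {K : Type*} [Field K] {a b : ℕ}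

theorem finrank_rowSpace (M : Matrix (Fin a) (Fin b) K) :
    Module.finrank K (rowSpace M) = M.rank :=
  M.rank_eq_finrank_span_row.symm

theorem rowSpace_eq_top_iff_rank_eq {M : Matrix (Fin a) (Fin b) K} :
    rowSpace M = ⊤ ↔ M.rank = b := by
  rw [Submodule.eq_top_iff_finrank_eq, finrank_rowSpace, Module.finrank_fin_fun]

theorem rowSupport_eq_top_of_mem_of_rank_eq {D : Submodule K (Matrix (Fin a) (Fin b) K)}
    {M : Matrix (Fin a) (Fin b) K} (hM : M ∈ D) (hrank : M.rank = b) : rowSupport D = ⊤ :=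
  top_le_iff.1 (le_iSup₂_of_le M hM (rowSpace_eq_top_iff_rank_eq.2 hrank).ge)

end RowSupport

section Tensor

variable {K : Type*} [Field K] {m n k : ℕ} {B : Fin k → Matrix (Fin m) (Fin n) K}

theorem mem_span_range_iff_exists_combMap {M : Matrix (Fin m) (Fin n) K} :
    M ∈ Submodule.span K (Set.range B) ↔ ∃ u, combMap B u = M :=
  Submodule.mem_span_range_iff_exists_fun K

theorem vecMul_combMap_colSlices (B : Fin k → Matrix (Fin m) (Fin n) K) (u : Fin k → K)
    (v : Fin n → K) : u ᵥ* combMap (colSlices B) v = combMap B u *ᵥ v := by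
  ext j
  calc (u ᵥ* combMap (colSlices B) v) j
    _ = ∑ i, u i * ∑ l, v l * B i j l := by
      simp [combMap, colSlices, vecMul, dotProduct, Matrix.sum_apply]
    _ = ∑ l, (∑ i, u i * B i j l) * v l := by
      simp only [Finset.mul_sum, Finset.sum_mul]
      rw [Finset.sum_comm]
      exact Finset.sum_congr rfl fun l _ => Finset.sum_congr rfl fun i _ => by ring
    _ = (combMap B u *ᵥ v) j := by
      simp [combMap, mulVec, dotProduct, Matrix.sum_apply]

/-- The tensor with slices `B` is nonsingular in its first and third modes: the bilinear map
`(u, v) ↦ (∑ i, u i • B i) v` from `K^k × K^n` to `K^m` has no zero divisors. It is the common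
reformulation of the full-rank conditions on the code and on its column-system. -/
def IsNonsingularTensor (B : Fin k → Matrix (Fin m) (Fin n) K) : Prop :=
  ∀ (u : Fin k → K) (v : Fin n → K), combMap B u *ᵥ v = 0 → u = 0 ∨ v = 0

theorem isNonsingularTensor_iff_rank_combMap :
    IsNonsingularTensor B ↔ ∀ u, u ≠ 0 → (combMap B u).rank = n := by
  have rank_iff (u : Fin k → K) :
      (combMap B u).rank = n ↔ ∀ v, combMap B u *ᵥ v = 0 → v = 0 := by
    simpa only [Fintype.card_fin] using rank_eq_card_width_iff (M := combMap B u)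
  simp only [IsNonsingularTensor, rank_iff]
  grind

theorem isNonsingularTensor_iff_rank_combMap_colSlices :
    IsNonsingularTensor B ↔ ∀ v, v ≠ 0 → (combMap (colSlices B) v).rank = k := by
  have rank_iff (v : Fin n → K) :
      (combMap (colSlices B) v).rank = k ↔ ∀ u, combMap B u *ᵥ v = 0 → u = 0 := by
    simpa only [Fintype.card_fin, vecMul_combMap_colSlices] using
      rank_eq_card_height_iff (M := combMap (colSlices B) v)
  simp only [IsNonsingularTensor, rank_iff]
  grind

theorem isNonsingularTensor_of_rank_eq (hB : LinearIndependent K B)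
    (hrank : ∀ M ∈ Submodule.span K (Set.range B), M ≠ 0 → M.rank = n) :
    IsNonsingularTensor B :=
  isNonsingularTensor_iff_rank_combMap.2 fun u hu =>
    hrank _ (mem_span_range_iff_exists_combMap.2 ⟨u, rfl⟩)
      (mt (linearIndependent_iff_combMap_eq_zero.1 hB u) hu)

theorem IsNonsingularTensor.linearIndependent_colSlices (h : IsNonsingularTensor B) (hk : 0 < k) :
    LinearIndependent K (colSlices B) := by
  refine linearIndependent_iff_combMap_eq_zero.2 fun v hv => ?_
  have : NeZero k := ⟨hk.ne'⟩
  obtain ⟨u, hu⟩ := exists_ne (0 : Fin k → K)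
  refine (h u v ?_).resolve_left hu
  rw [← vecMul_combMap_colSlices, hv, vecMul_zero]

theorem IsNonsingularTensor.rank_eq_of_mem_span_colSlices (h : IsNonsingularTensor B)
    {X : Matrix (Fin k) (Fin m) K} (hX : X ∈ Submodule.span K (Set.range (colSlices B)))
    (hX0 : X ≠ 0) : X.rank = k := by
  obtain ⟨v, rfl⟩ := mem_span_range_iff_exists_combMap.1 hX
  have hv : v ≠ 0 := by
    rintro rfl
    exact hX0 (map_zero _)
  exact isNonsingularTensor_iff_rank_combMap_colSlices.1 h v hv

end Tensor

theorem stmt16_general {K : Type*} [Field K] {m n k : ℕ} (hk : 0 < k)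
    (B : Fin k → Matrix (Fin m) (Fin n) K) (hB : LinearIndependent K B)
    (C : Submodule K (Matrix (Fin m) (Fin n) K))
    (hC : C = Submodule.span K (Set.range B))
    (hrank : ∀ M ∈ C, M ≠ 0 → M.rank = n)
    (S : Submodule K (Matrix (Fin k) (Fin m) K))
    (hS : S = Submodule.span K (Set.range (colSlices B))) :
    rowSupport C = ⊤ ∧ LinearIndependent K (colSlices B) ∧
      ∀ X ∈ S, X ≠ 0 → X.rank = k := by
  subst hC hS
  have hns : IsNonsingularTensor B := isNonsingularTensor_of_rank_eq hB hrank
  have hmem : B ⟨0, hk⟩ ∈ Submodule.span K (Set.range B) :=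
    Submodule.subset_span (Set.mem_range_self _)
  exact ⟨rowSupport_eq_top_of_mem_of_rank_eq hmem (hrank _ hmem (hB.ne_zero _)),
    hns.linearIndependent_colSlices hk,
    fun _ => hns.rank_eq_of_mem_span_colSlices⟩

/-- If every nonzero codeword of `C = span{B₁,…,B_k}` has rank `n`, then `C`
is column-nondegenerate (equivalently, the slices `X₁,…,X_n` are linearly independent) and
every nonzero element of the associated column-system `S` has rank `k`. -/
theorem stmt16 {F : Type*} [Field F] [Fintype F] {m n k : ℕ}
    (hm : 0 < m) (hn : 0 < n) (hk : 0 < k)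
    (B : Fin k → Matrix (Fin m) (Fin n) F) (hB : LinearIndependent F B)
    (C : Submodule F (Matrix (Fin m) (Fin n) F))
    (hC : C = Submodule.span F (Set.range B))
    (hrank : ∀ M ∈ C, M ≠ 0 → M.rank = n)
    (S : Submodule F (Matrix (Fin k) (Fin m) F))
    (hS : S = Submodule.span F (Set.range (colSlices B))) :
    rowSupport C = ⊤ ∧ LinearIndependent F (colSlices B) ∧
      ∀ X ∈ S, X ≠ 0 → X.rank = k :=
  stmt16_general hk B hB C hC hrank S hS
end

section
/- (Knuth.) Let F be a finite field and let B₁,…,B_n ∈ F^{n×n} be a linearly independent family of matrices generating a code C = span_F{B₁,…,B_n} such that every nonzero M ∈ C has rank(M) = n. Then the column-system slices X₁,…,X_n and the row-system slices Y₁,…,Y_n are each linearly independent families, and every nonzero element of S = span_F{X₁,…,X_n} has rank n and every nonzero element of T = span_F{Y₁,…,Y_n} has rank n. -/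
open Matrix

/-!
Write `m(u, w) = (∑ i, uᵢ • Bᵢ) *ᵥ w`. The rank hypothesis says that this bilinear map has no zero
divisors: `m(u, w) = 0` only if `u = 0` or `w = 0`. Row `i` of `∑ l, w_l • X_l` is `Bᵢ *ᵥ w`, so a
linear relation `u` among the rows of this matrix is an equation `m(u, w) = 0`; hence for `w ≠ 0`
the rows are independent. The row-system slices are the transposes of the column-system slices
of the transposed family, and transposition preserves rank.
-/

theorem rank_eq_card_iff_mulVec_injective {R m n : Type*} [CommRing R] [Nontrivial R]
    [Fintype n] {M : Matrix m n R} : M.rank = Fintype.card n ↔ Function.Injective M.mulVec := by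
  rw [mulVec_injective_iff, linearIndependent_iff_card_eq_finrank_span, rank_eq_finrank_span_cols,
    Set.finrank, eq_comm]

section ConstantRank

variable {R ι m n : Type*} [CommRing R] [Fintype ι] [Fintype n] {A : ι → Matrix m n R} {r : ℕ}

/-- A family of matrices has constant rank `r` if each of its linear combinations with a nonzero
coefficient vector has rank `r`. Quantifying over coefficient vectors, and not over nonzero elements
of the span, makes linear independence part of the notion when `0 < r`. -/
def HasConstantRank (A : ι → Matrix m n R) (r : ℕ) : Prop :=
  ∀ c : ι → R, c ≠ 0 → (∑ i, c i • A i).rank = r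

theorem hasConstantRank_of_linearIndependent (hA : LinearIndependent R A)
    (hrank : ∀ M ∈ Submodule.span R (Set.range A), M ≠ 0 → M.rank = r) :
    HasConstantRank A r := fun c hc =>
  hrank _ ((Submodule.mem_span_range_iff_exists_fun R).mpr ⟨c, rfl⟩) fun hsum =>
    hc (funext (Fintype.linearIndependent_iff.mp hA c hsum))

namespace HasConstantRank

theorem linearIndependent (hA : HasConstantRank A r) (hr : 0 < r) : LinearIndependent R A := by
  nontriviality R
  refine Fintype.linearIndependent_iff.mpr fun c hsum => congrFun ?_
  by_contra hc
  have hrank := hA c hc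
  rw [hsum, rank_zero] at hrank
  exact hr.ne hrank

theorem rank_eq_of_mem_span (hA : HasConstantRank A r) {M : Matrix m n R}
    (hM : M ∈ Submodule.span R (Set.range A)) (hM0 : M ≠ 0) : M.rank = r := by
  obtain ⟨c, rfl⟩ := (Submodule.mem_span_range_iff_exists_fun R).mp hM
  refine hA c ?_
  rintro rfl
  simp at hM0

theorem linearIndependent_mulVec (hA : HasConstantRank A (Fintype.card n)) {w : n → R}
    (hw : w ≠ 0) : LinearIndependent R fun i => A i *ᵥ w := by
  nontriviality R
  refine Fintype.linearIndependent_iff.mpr fun c hsum => congrFun ?_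
  by_contra hc
  have hinj := rank_eq_card_iff_mulVec_injective.mp (hA c hc)
  have hmulVec : (∑ i, c i • A i) *ᵥ w = 0 := by
    simpa only [sum_mulVec, smul_mulVec] using hsum
  exact hw (hinj (hmulVec.trans (mulVec_zero _).symm))

theorem transpose {K : Type*} [Field K] [Fintype m] {A : ι → Matrix m n K}
    (hA : HasConstantRank A r) : HasConstantRank (fun i => (A i)ᵀ) r := fun c hc => by
  simp only [← transpose_smul, ← transpose_sum]
  rw [rank_transpose, hA c hc]

end HasConstantRank

end ConstantRank

section Slices

variable {m n k : ℕ}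

theorem sum_smul_colSlices {R : Type*} [CommSemiring R] (B : Fin k → Matrix (Fin m) (Fin n) R)
    (w : Fin n → R) : ∑ l, w l • colSlices B l = Matrix.of fun i => B i *ᵥ w := by
  ext i j
  simp only [colSlices, Matrix.sum_apply, Matrix.smul_apply, of_apply, smul_eq_mul, mulVec,
    dotProduct, mul_comm]

theorem rowSlices_eq_transpose_colSlices {α : Type*} (B : Fin k → Matrix (Fin m) (Fin n) α) :
    rowSlices B = fun j => (colSlices (fun i => (B i)ᵀ) j)ᵀ :=
  rfl

variable {K : Type*} [Field K] {B : Fin k → Matrix (Fin m) (Fin n) K}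

theorem hasConstantRank_colSlices (hB : HasConstantRank B n) :
    HasConstantRank (colSlices B) k := fun w hw => by
  have hB' : HasConstantRank B (Fintype.card (Fin n)) := by rwa [Fintype.card_fin]
  rw [sum_smul_colSlices]
  exact (hB'.linearIndependent_mulVec hw).rank_matrix.trans (Fintype.card_fin k)

theorem hasConstantRank_rowSlices (hB : HasConstantRank B m) :
    HasConstantRank (rowSlices B) k := by
  rw [rowSlices_eq_transpose_colSlices]
  exact (hasConstantRank_colSlices hB.transpose).transpose

end Slices

theorem stmt17_general {K : Type*} [Field K] {n k : ℕ} (hk : 0 < k)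
    (B : Fin k → Matrix (Fin n) (Fin n) K) (hB : LinearIndependent K B)
    (hrank : ∀ M ∈ Submodule.span K (Set.range B), M ≠ 0 → M.rank = n) :
    LinearIndependent K (colSlices B) ∧ LinearIndependent K (rowSlices B) ∧
      (∀ X ∈ Submodule.span K (Set.range (colSlices B)), X ≠ 0 → X.rank = k) ∧
      (∀ Y ∈ Submodule.span K (Set.range (rowSlices B)), Y ≠ 0 → Y.rank = k) := by
  have hconst : HasConstantRank B n := hasConstantRank_of_linearIndependent hB hrank
  have hcol : HasConstantRank (colSlices B) k := hasConstantRank_colSlices hconst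
  have hrow : HasConstantRank (rowSlices B) k := hasConstantRank_rowSlices hconst
  exact ⟨hcol.linearIndependent hk, hrow.linearIndependent hk,
    fun _ => hcol.rank_eq_of_mem_span, fun _ => hrow.rank_eq_of_mem_span⟩

/-- Knuth: If every nonzero element of `C = span{B₁,…,B_n} ⊆ F^{n×n}` has
rank `n`, then the column-system slices and the row-system slices are each linearly
independent, and every nonzero element of `S` and of `T` has rank `n`. -/
theorem stmt17 {F : Type*} [Field F] [Fintype F] {n : ℕ} (hn : 0 < n)
    (B : Fin n → Matrix (Fin n) (Fin n) F) (hB : LinearIndependent F B)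
    (C : Submodule F (Matrix (Fin n) (Fin n) F))
    (hC : C = Submodule.span F (Set.range B))
    (hrank : ∀ M ∈ C, M ≠ 0 → M.rank = n)
    (S : Submodule F (Matrix (Fin n) (Fin n) F))
    (hS : S = Submodule.span F (Set.range (colSlices B)))
    (T : Submodule F (Matrix (Fin n) (Fin n) F))
    (hT : T = Submodule.span F (Set.range (rowSlices B))) :
    LinearIndependent F (colSlices B) ∧ LinearIndependent F (rowSlices B) ∧
      (∀ X ∈ S, X ≠ 0 → X.rank = n) ∧ (∀ Y ∈ T, Y ≠ 0 → Y.rank = n) := by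
  subst hC hS hT
  exact stmt17_general hn B hB hrank
end

section
/- Let K be a field, let B₁,…,B_k ∈ K^{m×n} and B'₁,…,B'_k ∈ K^{m×n} be linearly independent families generating column-nondegenerate codes C = span_K{B₁,…,B_k} and C' = span_K{B'₁,…,B'_k}, and suppose C and C' are equivalent, i.e., there exist A ∈ GL_m(K) and B ∈ GL_n(K) with C' = {Aᵀ M B : M ∈ C}. Then the associated column-systems S and S' are equivalent: there exist P ∈ GL_k(K) and Q ∈ GL_m(K) such that S' = {P X Q : X ∈ S}. -/
open Matrix

/-!
Contracting the tensor `(B i) j l` in its slot `l` with a vector `v` gives `∑ l, v l • X l`, the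
matrix whose `i`-th row is `B i *ᵥ v`; the column-system is the set of all these contractions. If
`B' i = ∑ p, P i p • (Aᵀ * B p * U)`, the contraction of `B'` with `v` is `P * Y * A`, where `Y` is
the contraction of `B` with `U *ᵥ v`. Every vector has the form `U *ᵥ v`, whence `S' = P S A`. The
matrix `P` of coefficients is invertible because the `B' i` are linearly independent.
-/

theorem exists_isUnit_eq_sum_smul_of_mem_span {K V ι : Type*} [Field K] [AddCommGroup V]
    [Module K V] [Fintype ι] [DecidableEq ι] {v w : ι → V} (hv : LinearIndependent K v)
    (hmem : ∀ i, v i ∈ Submodule.span K (Set.range w)) :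
    ∃ P : Matrix ι ι K, IsUnit P ∧ ∀ i, v i = ∑ p, P i p • w p := by
  choose P hP using fun i => (Submodule.mem_span_range_iff_exists_fun K).mp (hmem i)
  have hcomp : Fintype.linearCombination K w ∘ P = v := funext hP
  have hrows : LinearIndependent K P := .of_comp (Fintype.linearCombination K w) (hcomp ▸ hv)
  exact ⟨P, linearIndependent_rows_iff_isUnit.mp hrows, fun i => (hP i).symm⟩

theorem mul_mul_mem_span_range {R ι l m n o : Type*} [CommSemiring R] [Fintype m] [Fintype n]
    {B : ι → Matrix m n R} {M : Matrix m n R} (hM : M ∈ Submodule.span R (Set.range B))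
    (L : Matrix l m R) (U : Matrix n o R) :
    L * M * U ∈ Submodule.span R (Set.range fun i => L * B i * U) := by
  have himage := Submodule.apply_mem_span_image_of_mem_span
    (mulRightLinearMap l R U ∘ₗ mulLeftLinearMap n R L) hM
  rwa [← Set.range_comp] at himage

section ColumnSystem

variable {K : Type*} [Field K] {m m' n n' k k' : ℕ}

theorem linearCombination_colSlices (B : Fin k → Matrix (Fin m) (Fin n) K) (v : Fin n → K) :
    Fintype.linearCombination K (colSlices B) v = of fun i => B i *ᵥ v := by
  ext i j
  simp [Fintype.linearCombination_apply, colSlices, Matrix.sum_apply, mulVec, dotProduct, mul_comm]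

variable {B : Fin k → Matrix (Fin m) (Fin n) K} {B' : Fin k' → Matrix (Fin m') (Fin n') K}
  {P : Matrix (Fin k') (Fin k) K} {A : Matrix (Fin m) (Fin m') K} {U : Matrix (Fin n) (Fin n') K}

theorem linearCombination_colSlices_eq_mul_mul
    (h : ∀ i, B' i = ∑ p, P i p • (Aᵀ * B p * U)) (v : Fin n' → K) :
    Fintype.linearCombination K (colSlices B') v =
      P * Fintype.linearCombination K (colSlices B) (U *ᵥ v) * A := by
  simp only [linearCombination_colSlices]
  refine funext fun i => ?_
  calc B' i *ᵥ v
      = ∑ p, P i p • ((B p *ᵥ (U *ᵥ v)) ᵥ* A) := by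
        simp only [h, sum_mulVec, smul_mulVec, ← mulVec_mulVec, mulVec_transpose]
    _ = (∑ p, P i p • (B p *ᵥ (U *ᵥ v))) ᵥ* A := by
        simp only [sum_vecMul, smul_vecMul]
    _ = (P * (of fun p => B p *ᵥ (U *ᵥ v)) * A) i := by
        rw [mul_apply_eq_vecMul, mul_apply_eq_vecMul, vecMul_eq_sum (P i)]
        rfl

theorem span_range_colSlices_eq_image (h : ∀ i, B' i = ∑ p, P i p • (Aᵀ * B p * U))
    (hU : Function.Surjective U.mulVec) :
    (Submodule.span K (Set.range (colSlices B')) : Set (Matrix (Fin k') (Fin m') K)) =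
      (fun X : Matrix (Fin k) (Fin m) K => P * X * A) ''
        (Submodule.span K (Set.range (colSlices B))) := by
  have hcomp : ⇑(Fintype.linearCombination K (colSlices B')) =
      (fun X : Matrix (Fin k) (Fin m) K => P * X * A) ∘
        Fintype.linearCombination K (colSlices B) ∘ U.mulVec :=
    funext (linearCombination_colSlices_eq_mul_mul h)
  simp only [← Fintype.range_linearCombination, LinearMap.coe_range]
  rw [hcomp, Set.range_comp, hU.range_comp]

end ColumnSystem

theorem stmt18_general {K : Type*} [Field K] {m m' n n' k : ℕ}
    {B : Fin k → Matrix (Fin m) (Fin n) K} {B' : Fin k → Matrix (Fin m') (Fin n') K}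
    (hB' : LinearIndependent K B')
    {A : Matrix (Fin m) (Fin m') K} {U : Matrix (Fin n) (Fin n') K}
    (hU : Function.Surjective U.mulVec)
    (hsub : (Submodule.span K (Set.range B') : Set (Matrix (Fin m') (Fin n') K)) ⊆
      (fun M : Matrix (Fin m) (Fin n) K => Aᵀ * M * U) '' (Submodule.span K (Set.range B))) :
    ∃ P : Matrix (Fin k) (Fin k) K, IsUnit P ∧
      (Submodule.span K (Set.range (colSlices B')) : Set (Matrix (Fin k) (Fin m') K)) =
        (fun X : Matrix (Fin k) (Fin m) K => P * X * A) ''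
          (Submodule.span K (Set.range (colSlices B))) := by
  have hmem : ∀ i, B' i ∈ Submodule.span K (Set.range fun p => Aᵀ * B p * U) := fun i => by
    obtain ⟨M, hM, hMi⟩ := hsub (Submodule.subset_span (Set.mem_range_self i))
    exact hMi ▸ mul_mul_mem_span_range hM Aᵀ U
  obtain ⟨P, hP, hB'P⟩ := exists_isUnit_eq_sum_smul_of_mem_span hB' hmem
  exact ⟨P, hP, span_range_colSlices_eq_image hB'P hU⟩

/-- If two column-nondegenerate codes `C, C'` are equivalent via
`C' = {Aᵀ M B₂ : M ∈ C}` with `A ∈ GL_m(K)`, `B₂ ∈ GL_n(K)`, then the associated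
column-systems `S, S'` are equivalent: `S' = {P X Q : X ∈ S}` for some `P ∈ GL_k(K)`,
`Q ∈ GL_m(K)`. -/
theorem stmt18 {K : Type*} [Field K] {m n k : ℕ}
    (hm : 0 < m) (hn : 0 < n) (hk : 0 < k)
    (B B' : Fin k → Matrix (Fin m) (Fin n) K)
    (hB : LinearIndependent K B) (hB' : LinearIndependent K B')
    (C C' : Submodule K (Matrix (Fin m) (Fin n) K))
    (hC : C = Submodule.span K (Set.range B))
    (hC' : C' = Submodule.span K (Set.range B'))
    (hndC : rowSupport C = ⊤) (hndC' : rowSupport C' = ⊤)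
    (S S' : Submodule K (Matrix (Fin k) (Fin m) K))
    (hS : S = Submodule.span K (Set.range (colSlices B)))
    (hS' : S' = Submodule.span K (Set.range (colSlices B')))
    (A : Matrix (Fin m) (Fin m) K) (B₂ : Matrix (Fin n) (Fin n) K)
    (hA : IsUnit A) (hB₂ : IsUnit B₂)
    (hequiv : (C' : Set (Matrix (Fin m) (Fin n) K))
        = (fun M => Aᵀ * M * B₂) '' (C : Set (Matrix (Fin m) (Fin n) K))) :
    ∃ P : Matrix (Fin k) (Fin k) K, ∃ Q : Matrix (Fin m) (Fin m) K,
      IsUnit P ∧ IsUnit Q ∧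
        (S' : Set (Matrix (Fin k) (Fin m) K))
          = (fun X => P * X * Q) '' (S : Set (Matrix (Fin k) (Fin m) K)) := by
  subst hC hC' hS hS'
  exact (stmt18_general hB' (mulVec_surjective_iff_isUnit.mpr hB₂) hequiv.subset).imp
    fun _ ⟨hP, hSS'⟩ => ⟨A, hP, hA, hSS'⟩
end

section
/- Let F be a finite field with q elements and let B₁,…,B_k ∈ F^{m×n} be a linearly independent family of matrices generating a column-nondegenerate matrix rank-metric code C = span_F{B₁,…,B_k}, with associated column-system S. Let R ⊆ S \ {0} be a set of representatives of the one-dimensional subspaces of S, i.e., every nonzero X ∈ S can be written uniquely as X = λ X' with λ ∈ F \ {0} and X' ∈ R. Then for every u ∈ F^k, (q − 1) · |{X ∈ R : uX ≠ 0}| = q^n − q^{n − rank(Σᵢ uᵢBᵢ)}, where uX ∈ F^m denotes the product of the row vector u with the matrix X ∈ F^{k×m}. -/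
open Matrix

/-!
The nonzero elements of `S` outside the kernel of `X ↦ u ᵥ* X` are the nonzero multiples of the
representatives outside it, so the left-hand side counts the `Z ∈ S` with `u ᵥ* Z ≠ 0`. By
rank-nullity this is `q ^ dim S - q ^ (dim S - r)`, where `r` is the dimension of the image of `S`.
The slice `X_l` is sent to the `l`-th column of `∑ i, u i • B i`, so `r` is the rank of that matrix.
Finally, stack the `B i` into one matrix with `n` columns. Up to reshaping, `S` is its column space,
while its row space is the row support of the code. So `dim S` is the dimension of the row support,
which is `n` in the nondegenerate case.
-/

section LineTransversal

variable {K V W : Type*} [DivisionRing K] [AddCommGroup V] [Module K V] [AddCommGroup W]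
  [Module K W] {S : Submodule K V} {R : Set V}

/-- `R` is a set of representatives of the one-dimensional subspaces of `S`: every nonzero vector
of `S` is a nonzero multiple of exactly one element of `R`, by exactly one scalar. -/
structure IsLineTransversal (S : Submodule K V) (R : Set V) : Prop where
  subset : R ⊆ (S : Set V) \ {0}
  existsUnique_smul : ∀ Z ∈ S, Z ≠ 0 → ∃! p : K × V, p.1 ≠ 0 ∧ p.2 ∈ R ∧ Z = p.1 • p.2

namespace IsLineTransversal

theorem bijOn_smul (hR : IsLineTransversal S R) :
    Set.BijOn (fun p : Kˣ × V => p.1 • p.2) (Set.univ ×ˢ R) ((S : Set V) \ {0}) := by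
  have hmaps : Set.MapsTo (fun p : Kˣ × V => p.1 • p.2) (Set.univ ×ˢ R) ((S : Set V) \ {0}) :=
    fun p hp => ⟨S.smul_mem (p.1 : K) (hR.subset hp.2).1,
      smul_ne_zero p.1.ne_zero (hR.subset hp.2).2⟩
  refine ⟨hmaps, ?_, ?_⟩
  · rintro ⟨a, X⟩ hX ⟨b, Y⟩ hY h
    obtain ⟨hS, hne⟩ := hmaps hX
    obtain ⟨hab, rfl⟩ := Prod.mk.inj <| (hR.existsUnique_smul _ hS hne).unique
      (y₁ := ((a : K), X)) (y₂ := ((b : K), Y)) ⟨a.ne_zero, hX.2, rfl⟩ ⟨b.ne_zero, hY.2, h⟩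
    rw [Units.ext hab]
  · rintro Z ⟨hZ, hne⟩
    obtain ⟨⟨a, X⟩, ⟨ha, hX, rfl⟩, -⟩ := hR.existsUnique_smul Z hZ hne
    exact ⟨(Units.mk0 a ha, X), ⟨Set.mem_univ _, hX⟩, rfl⟩

theorem bijOn_smul_map_ne_zero (hR : IsLineTransversal S R) (f : V →ₗ[K] W) :
    Set.BijOn (fun p : Kˣ × V => p.1 • p.2) (Set.univ ×ˢ {X | X ∈ R ∧ f X ≠ 0})
      {Z | Z ∈ S ∧ f Z ≠ 0} := by
  have hsub : {Z | Z ∈ S ∧ f Z ≠ 0} ⊆ (S : Set V) \ {0} :=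
    fun Z hZ => ⟨hZ.1, ne_of_apply_ne f (by simpa using hZ.2)⟩
  convert hR.bijOn_smul.subset_right hsub using 1
  ext ⟨a, X⟩
  have hS : X ∈ R → a • X ∈ S := fun hX => S.smul_mem (a : K) (hR.subset hX).1
  have hf : f (a • X) = 0 ↔ f X = 0 := by simp [Units.smul_def]
  simp only [Set.mem_prod, Set.mem_univ, Set.mem_ofPred_eq, Set.mem_inter_iff, Set.mem_preimage,
    ne_eq, hf]
  tauto

theorem natCard_units_mul_natCard_map_ne_zero (hR : IsLineTransversal S R) (f : V →ₗ[K] W) :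
    Nat.card Kˣ * Nat.card {X // X ∈ R ∧ f X ≠ 0} = Nat.card {Z // Z ∈ S ∧ f Z ≠ 0} := by
  have h := (hR.bijOn_smul_map_ne_zero f).ncard_eq
  rwa [Set.ncard_prod, Set.ncard_univ] at h

end IsLineTransversal

theorem natCard_map_ne_zero_add [Finite K] [Module.Finite K V] (f : V →ₗ[K] W) :
    Nat.card {v // f v ≠ 0} +
        Nat.card K ^ (Module.finrank K V - Module.finrank K (LinearMap.range f)) =
      Nat.card K ^ Module.finrank K V := by
  classical
  have : Finite V := Module.finite_of_finite K
  have hker : Module.finrank K V - Module.finrank K (LinearMap.range f) =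
      Module.finrank K (LinearMap.ker f) :=
    Nat.sub_eq_of_eq_add' f.finrank_range_add_finrank_ker.symm
  rw [hker, ← Module.natCard_eq_pow_finrank, ← Module.natCard_eq_pow_finrank, add_comm,
    ← Nat.card_sum]
  exact Nat.card_congr (Equiv.sumCompl fun v => f v = 0)

theorem natCard_mem_and_map_ne_zero_add [Finite K] (S : Submodule K V) [Module.Finite K S]
    (f : V →ₗ[K] W) :
    Nat.card {Z // Z ∈ S ∧ f Z ≠ 0} +
        Nat.card K ^ (Module.finrank K S - Module.finrank K (S.map f)) =
      Nat.card K ^ Module.finrank K S := by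
  rw [← natCard_map_ne_zero_add (f.domRestrict S), LinearMap.range_domRestrict]
  congr 1
  exact (Nat.card_congr (Equiv.subtypeSubtypeEquivSubtypeInter _ _)).symm

end LineTransversal

section Slices

variable {K : Type*} [Field K] {m n k : ℕ} (B : Fin k → Matrix (Fin m) (Fin n) K)

/-- The matrices `B i` stacked on top of each other: the row with index `(i, j)` is the `j`-th row
of `B i`. Its row space is the row support of the code, and its column space is the column-system,
once vectors indexed by `Fin k × Fin m` are read as `k × m` matrices. -/
def verticalStack : Matrix (Fin k × Fin m) (Fin n) K :=
  Matrix.of fun p l => B p.1 p.2 l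

theorem rowSupport_span {a b : ℕ} (s : Set (Matrix (Fin a) (Fin b) K)) :
    rowSupport (Submodule.span K s) = ⨆ M ∈ s, rowSpace M := by
  refine le_antisymm (iSup₂_le fun M hM => Submodule.span_le.2 ?_)
    (biSup_mono fun M hM => Submodule.subset_span hM)
  rintro _ ⟨j, rfl⟩
  induction hM using Submodule.span_induction with
  | mem M hM => exact Submodule.mem_iSup_of_mem M <| Submodule.mem_iSup_of_mem hM <|
      Submodule.subset_span ⟨j, rfl⟩
  | zero => exact Submodule.zero_mem _
  | add M N _ _ hM hN => exact Submodule.add_mem _ hM hN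
  | smul a M _ hM => exact Submodule.smul_mem _ a hM

theorem span_range_row_verticalStack :
    Submodule.span K (Set.range (verticalStack B).row) =
      rowSupport (Submodule.span K (Set.range B)) := by
  rw [rowSupport_span, iSup_range]
  simp only [rowSpace, Submodule.iSup_span]
  congr 1
  ext v
  simp only [Set.mem_range, Set.mem_iUnion, Prod.exists]
  rfl

theorem map_curry_span_range_col_verticalStack :
    (Submodule.span K (Set.range (verticalStack B).col)).map
        (LinearEquiv.curry K K (Fin k) (Fin m) ≪≫ₗ ofLinearEquiv K).toLinearMap =
      Submodule.span K (Set.range (colSlices B)) := by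
  rw [Submodule.map_span, ← Set.range_comp]
  rfl

theorem finrank_span_range_colSlices :
    Module.finrank K (Submodule.span K (Set.range (colSlices B))) =
      Module.finrank K (rowSupport (Submodule.span K (Set.range B))) := by
  rw [← map_curry_span_range_col_verticalStack, LinearEquiv.finrank_map_eq,
    ← rank_eq_finrank_span_cols, rank_eq_finrank_span_row, span_range_row_verticalStack]

theorem vecMul_colSlices (u : Fin k → K) (l : Fin n) :
    u ᵥ* colSlices B l = (∑ i, u i • B i).col l := by
  ext j
  simp [Matrix.vecMul, dotProduct, colSlices, Matrix.sum_apply]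

theorem finrank_map_vecMul_span_range_colSlices (u : Fin k → K) :
    Module.finrank K ((Submodule.span K (Set.range (colSlices B))).map (vecMulBilin K K u)) =
      (∑ i, u i • B i).rank := by
  rw [Submodule.map_span, ← Set.range_comp, rank_eq_finrank_span_cols]
  exact congrArg (fun c => Module.finrank K (Submodule.span K (Set.range c)))
    (funext (vecMul_colSlices B u))

end Slices

theorem stmt19_general {F : Type*} [Field F] [Finite F] {m n k : ℕ}
    (B : Fin k → Matrix (Fin m) (Fin n) F) {R : Set (Matrix (Fin k) (Fin m) F)}
    (hR : IsLineTransversal (Submodule.span F (Set.range (colSlices B))) R) (u : Fin k → F) :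
    ((Nat.card F : ℤ) - 1) * (Nat.card {X // X ∈ R ∧ u ᵥ* X ≠ 0} : ℤ) =
      (Nat.card F : ℤ) ^ Module.finrank F (rowSupport (Submodule.span F (Set.range B))) -
        (Nat.card F : ℤ) ^ (Module.finrank F (rowSupport (Submodule.span F (Set.range B))) -
          (∑ i, u i • B i).rank) := by
  have hmul := hR.natCard_units_mul_natCard_map_ne_zero (vecMulBilin F F u)
  have hadd := natCard_mem_and_map_ne_zero_add (Submodule.span F (Set.range (colSlices B)))
    (vecMulBilin F F u)
  rw [← hmul, finrank_map_vecMul_span_range_colSlices, finrank_span_range_colSlices] at hadd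
  have hunits : (Nat.card F : ℤ) - 1 = Nat.card Fˣ := by
    rw [Nat.card_eq_card_units_add_one F, Nat.cast_add_one, add_sub_cancel_right]
  rw [hunits, eq_sub_iff_add_eq]
  exact_mod_cast hadd

/-- Let `R` be a set of representatives of the one-dimensional subspaces of
the column-system `S` associated with a column-nondegenerate code `C = span{B₁,…,B_k}`.
Then for every `u ∈ F^k`,
`(q − 1)·|{X ∈ R : uX ≠ 0}| = q^n − q^{n − rk(∑ i, uᵢ Bᵢ)}`. -/
theorem stmt19 {F : Type*} [Field F] [Fintype F] {m n k : ℕ}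
    (hm : 0 < m) (hn : 0 < n) (hk : 0 < k)
    (q : ℕ) (hq : q = Fintype.card F)
    (B : Fin k → Matrix (Fin m) (Fin n) F) (hB : LinearIndependent F B)
    (C : Submodule F (Matrix (Fin m) (Fin n) F))
    (hC : C = Submodule.span F (Set.range B))
    (hnd : rowSupport C = ⊤)
    (S : Submodule F (Matrix (Fin k) (Fin m) F))
    (hS : S = Submodule.span F (Set.range (colSlices B)))
    (R : Set (Matrix (Fin k) (Fin m) F))
    (hR1 : R ⊆ (S : Set (Matrix (Fin k) (Fin m) F)) \ {0})
    (hR2 : ∀ Z ∈ S, Z ≠ (0 : Matrix (Fin k) (Fin m) F) →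
      ∃! p : F × Matrix (Fin k) (Fin m) F, p.1 ≠ 0 ∧ p.2 ∈ R ∧ Z = p.1 • p.2)
    (u : Fin k → F) :
    ((q : ℤ) - 1) *
        (Nat.card {X : Matrix (Fin k) (Fin m) F // X ∈ R ∧ u ᵥ* X ≠ 0} : ℤ)
      = (q : ℤ) ^ n - (q : ℤ) ^ (n - (∑ i, u i • B i).rank) := by
  subst hq hC hS
  have h := stmt19_general B ⟨hR1, hR2⟩ u
  rwa [hnd, finrank_top, Module.finrank_fin_fun, Nat.card_eq_fintype_card] at h
end
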